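/- Let d ≥ 2 be an integer and let T = (V,E) be a tournament that is critical d-dominated and has no (d+1)-dominating subtournament. Define a 2-coloring c of the complete digraph on V by c(x,y) = blue if (x,y) ∈ E and c(x,y) = red otherwise (so all loops and all reversed edges are red). Then V cannot be covered by fewer than d + 1 monochromatic (d+1)-dominating subgraphs of this 2-colored complete digraph. -/

import Mathlib

/-- The two colors for 2-colorings of complete digraphs. -/
inductive Color where
  | red : Color
  | blue : Color

/-- `E` is a tournament on `V`: loopless, and for all distinct `x,y` exactly one of
`(x,y)`, `(y,x)` is an edge. -/
def IsTournament {V : Type*} (E : V → V → Prop) : Prop :=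
  (∀ x : V, ¬ E x x) ∧ ∀ x y : V, x ≠ y → (E x y ↔ ¬ E y x)

/-- The restriction of the digraph `E` to `U` is `d`-dominating: every finite `S ⊆ U`
with `1 ≤ |S| ≤ d` has a common out-neighbor in `U`. -/
def DomOn {V : Type*} (E : V → V → Prop) (d : ℕ) (U : Set V) : Prop :=
  ∀ S : Finset V, ↑S ⊆ U → S.Nonempty → S.card ≤ d → ∃ w ∈ U, ∀ s ∈ S, E s w

/-- The restriction of the digraph `E` to `U` is `d`-dominated: every finite `S ⊆ U`
with `1 ≤ |S| ≤ d` has a common in-neighbor in `U`. -/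
def DomedOn {V : Type*} (E : V → V → Prop) (d : ℕ) (U : Set V) : Prop :=
  ∀ S : Finset V, ↑S ⊆ U → S.Nonempty → S.card ≤ d → ∃ w ∈ U, ∀ s ∈ S, E w s

/-- `U`, together with the color `j`, is the vertex set of a monochromatic
`d`-dominating subgraph of the complete digraph 2-colored by `c`. -/
def IsMonoDom {V : Type*} (c : V → V → Color) (d : ℕ) (j : Color) (U : Set V) : Prop :=
  ∀ S : Finset V, ↑S ⊆ U → S.Nonempty → S.card ≤ d →
    ∃ w ∈ U, ∀ s ∈ S, c s w = j

/-! The red digraph is the complement `Eᶜ`, and every nonempty member of the cover is red. A red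
member `U` has a source, meaning a vertex receiving no edge from `U`. Indeed, if `U` is proper, then
by criticality some nonempty `S ⊆ U` with `|S| ≤ d` has no common in-neighbor in `U`. For `y ∈ U`, a
common red out-neighbor of `S ∪ {y}` would be such an in-neighbor if it lay outside `S`, so it is
the unique source of `S`, whatever `y` is. The same argument with one vertex deleted shows that `V`
itself is not red. Finally, a common in-neighbor of the sources of at most `d` members lies in none
of these members. -/

section

variable {V ι : Type*} {E F : V → V → Prop} {d : ℕ} {U W : Set V}

/-- The digraph `E` on the whole type `V` is critical `d`-dominated. Only nonempty proper
subdigraphs are required not to be `d`-dominated, since the empty one is so vacuously. -/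
structure IsCriticalDomed (E : V → V → Prop) (d : ℕ) : Prop where
  domedOn_univ : DomedOn E d Set.univ
  not_domedOn : ∀ U : Set V, U.Nonempty → U ≠ Set.univ → ¬ DomedOn E d U

theorem DomOn.mono (hEF : E ≤ F) (hE : DomOn E d U) : DomOn F d U := fun S hSU hS hSd =>
  (hE S hSU hS hSd).imp fun w hw => ⟨hw.1, fun s hs => hEF s w (hw.2 s hs)⟩

theorem DomedOn.exists_adj_pair (hU : DomedOn E d U) (hd : 2 ≤ d) {x y : V} (hx : x ∈ U)
    (hy : y ∈ U) : ∃ v ∈ U, E v x ∧ E v y := by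
  classical
  obtain ⟨v, hvU, hv⟩ := hU {x, y} (by simp [Set.insert_subset_iff, hx, hy]) (by simp)
    (Finset.card_le_two.trans hd)
  exact ⟨v, hvU, hv x (by simp), hv y (by simp)⟩

theorem DomedOn.lt_card_of_iUnion_eq_univ [Nonempty V] [Fintype ι] (hE : DomedOn E d Set.univ)
    {U : ι → Set V} (hcov : ⋃ i, U i = Set.univ)
    (hsource : ∀ i, ∃ a, ∀ y ∈ U i, ¬ E y a) : d < Fintype.card ι := by
  classical
  choose a ha using hsource
  have hmem (v : V) : ∃ i, v ∈ U i := Set.iUnion_eq_univ_iff.1 hcov v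
  have : Nonempty ι := ‹Nonempty V›.elim fun v => (hmem v).nonempty
  by_contra! hcard
  obtain ⟨v, -, hv⟩ := hE (Finset.univ.image a) (Set.subset_univ _)
    (Finset.univ_nonempty.image a) (Finset.card_image_le.trans hcard)
  obtain ⟨i, hi⟩ := hmem v
  exact ha i v hi (hv (a i) (Finset.mem_image_of_mem a (Finset.mem_univ i)))

theorem DomOn.exists_not_adj_or_of_not_domedOn [Std.Trichotomous E] (hU : DomOn Eᶜ (d + 1) U)
    (hWU : W ⊆ U) (hW : ¬ DomedOn E d W) :
    ∃ a ∈ W, ∀ y ∈ U, ¬ E y a ∨ ∃ w ∈ U \ W, ¬ E y w := by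
  classical
  unfold DomedOn at hW
  push Not at hW
  obtain ⟨S, hSW, hS, hSd, hnoin⟩ := hW
  have hred : ∀ y ∈ U, ∃ w ∈ U, ¬ E y w ∧ ∀ s ∈ S, ¬ E s w := by
    intro y hy
    obtain ⟨w, hwU, hw⟩ := hU (insert y S)
      (by simpa only [Finset.coe_insert] using Set.insert_subset hy (hSW.trans hWU))
      (Finset.insert_nonempty y S) ((Finset.card_insert_le y S).trans (by lia))
    exact ⟨w, hwU, hw y (Finset.mem_insert_self y S),
      fun s hs => hw s (Finset.mem_insert_of_mem hs)⟩
  have hmem : ∀ w ∈ W, (∀ s ∈ S, ¬ E s w) → w ∈ S := by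
    intro w hwW hw
    obtain ⟨s, hs, hws⟩ := hnoin w hwW
    rwa [Std.Trichotomous.trichotomous w s hws (hw s hs)]
  by_cases hsource : ∃ a ∈ W, ∀ s ∈ S, ¬ E s a
  · obtain ⟨a, haW, ha⟩ := hsource
    refine ⟨a, haW, fun y hy => ?_⟩
    obtain ⟨w, hwU, hyw, hw⟩ := hred y hy
    by_cases hwW : w ∈ W
    · have hwa : w = a := Std.Trichotomous.trichotomous w a
        (ha w (hmem w hwW hw)) (hw a (hmem a haW ha))
      exact Or.inl (hwa ▸ hyw)
    · exact Or.inr ⟨w, ⟨hwU, hwW⟩, hyw⟩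
  · obtain ⟨a, haS⟩ := hS
    refine ⟨a, hSW haS, fun y hy => Or.inr ?_⟩
    obtain ⟨w, hwU, hyw, hw⟩ := hred y hy
    exact ⟨w, ⟨hwU, fun hwW => hsource ⟨w, hwW, hw⟩⟩, hyw⟩

theorem IsCriticalDomed.not_domOn_compl_univ [Nonempty V] [Std.Trichotomous E]
    (hE : IsCriticalDomed E d) (hd : 2 ≤ d) : ¬ DomOn Eᶜ (d + 1) Set.univ := by
  intro hred
  obtain ⟨x⟩ := ‹Nonempty V›
  have hne : ({x}ᶜ : Set V).Nonempty := by
    obtain ⟨z, -, hzx, -⟩ := hE.domedOn_univ.exists_adj_pair hd (Set.mem_univ x) (Set.mem_univ x)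
    obtain ⟨w, -, hw⟩ := hred {x} (Set.subset_univ _) (Finset.singleton_nonempty x) (by simp)
    have hxw : ¬ E x w := hw x (Finset.mem_singleton_self x)
    rcases eq_or_ne z x with rfl | hz
    · exact ⟨w, fun hwz : w = z => hxw (hwz ▸ hzx)⟩
    · exact ⟨z, hz⟩
  have hnd : ¬ DomedOn E d {x}ᶜ :=
    hE.not_domedOn _ hne (Set.compl_ne_univ.2 (Set.singleton_nonempty x))
  obtain ⟨a, -, ha⟩ := hred.exists_not_adj_or_of_not_domedOn (Set.subset_univ _) hnd
  obtain ⟨v, -, hva, hvx⟩ :=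
    hE.domedOn_univ.exists_adj_pair hd (Set.mem_univ a) (Set.mem_univ x)
  rcases ha v (Set.mem_univ v) with h | ⟨w, ⟨-, hw⟩, hvw⟩
  · exact h hva
  · obtain rfl : w = x := not_not.1 hw
    exact hvw hvx

theorem IsCriticalDomed.exists_source_of_domOn_compl [Nonempty V] [Std.Trichotomous E]
    (hE : IsCriticalDomed E d) (hd : 2 ≤ d) (hU : DomOn Eᶜ (d + 1) U) :
    ∃ a, ∀ y ∈ U, ¬ E y a := by
  rcases U.eq_empty_or_nonempty with rfl | hne
  · simp
  have hproper : U ≠ Set.univ := by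
    rintro rfl
    exact hE.not_domOn_compl_univ hd hU
  obtain ⟨a, -, ha⟩ := hU.exists_not_adj_or_of_not_domedOn subset_rfl (hE.not_domedOn U hne hproper)
  exact ⟨a, by simpa using ha⟩

theorem critical_tournament_coloring_lower_bound_general [Nonempty V] [Fintype ι]
    [Std.Trichotomous E] (hd : 2 ≤ d) (hE : IsCriticalDomed E d)
    (hnosub : ∀ U : Set V, U.Nonempty → ¬ DomOn E (d + 1) U) {c : V → V → Color}
    (hblue : ∀ x y, E x y → c x y = Color.blue) (hred : ∀ x y, ¬ E x y → c x y = Color.red)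
    {U : ι → Set V} {j : ι → Color} (hcov : ⋃ i, U i = Set.univ)
    (hmono : ∀ i, IsMonoDom c (d + 1) (j i) (U i)) : d + 1 ≤ Fintype.card ι := by
  refine hE.domedOn_univ.lt_card_of_iUnion_eq_univ hcov fun i => ?_
  have hdom : DomOn (fun s w => c s w = j i) (d + 1) (U i) := hmono i
  cases hj : j i with
  | red =>
    refine hE.exists_source_of_domOn_compl hd (hdom.mono fun s w hsw (hadj : E s w) => ?_)
    simp [hj, hblue s w hadj] at hsw
  | blue =>
    have hdomE : DomOn E (d + 1) (U i) := hdom.mono fun s w hsw => by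
      by_contra hadj
      simp [hj, hred s w hadj] at hsw
    have hempty : U i = ∅ := Set.not_nonempty_iff_eq_empty.1 fun hne => hnosub _ hne hdomE
    simp [hempty]

end

/-- Theorem: if `T = (V,E)` is a critical `d`-dominated tournament with no
`(d+1)`-dominating subtournament, and the complete digraph on `V` is 2-colored with
the edges of `T` blue and everything else (loops and reversed edges) red, then `V`
cannot be covered by fewer than `d+1` monochromatic `(d+1)`-dominating subgraphs. -/
theorem critical_tournament_coloring_lower_bound {V : Type*} [Nonempty V]
    (d : ℕ) (hd : 2 ≤ d) (E : V → V → Prop) (hT : IsTournament E)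
    (hdomed : DomedOn E d (Set.univ : Set V))
    (hcrit : ∀ U : Set V, U.Nonempty → U ≠ Set.univ → ¬ DomedOn E d U)
    (hnosub : ∀ U : Set V, U.Nonempty → ¬ DomOn E (d + 1) U)
    (c : V → V → Color)
    (hcb : ∀ x y : V, E x y → c x y = Color.blue)
    (hcr : ∀ x y : V, ¬ E x y → c x y = Color.red) :
    ∀ (t : ℕ) (U : Fin t → Set V) (j : Fin t → Color),
      (⋃ i, U i) = Set.univ → (∀ i, IsMonoDom c (d + 1) (j i) (U i)) →
      d + 1 ≤ t := by
  intro t U j hcov hmono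
  have : Std.Trichotomous E :=
    ⟨fun x y hxy hyx => by_contra fun hne => hxy ((hT.2 x y hne).2 hyx)⟩
  simpa using critical_tournament_coloring_lower_bound_general hd ⟨hdomed, hcrit⟩ hnosub hcb hcr
    hcov hmono
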